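/- With the discrete distance d(s,s') = 1_{s ≠ s'}, the optimal value of the skewed Kantorovich linear program (max over x ∈ [0,1]^S of Σ_s (ω(s) - α ω'(s)) x_s subject to x_s - α x_{s'} ≤ d(s,s') for all s, s'), maximized symmetrically over the two orderings of ω, ω', equals the skewed total variation distance tv_α(ω, ω') = max over subsets E ⊆ S of Δ_α(ω(E), ω'(E)), for α ≥ 1 and probability distributions ω, ω' on a finite set S. -/

import Mathlib

open Finset

/-- The skew function Δ_α(x,y) = max{x - αy, y - αx, 0}. -/
def skew (α x y : ℝ) : ℝ := max (x - α * y) (max (y - α * x) 0)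

/-- Value of the skewed Kantorovich linear program for distance `d`,
objective `Σ_s (ω(s) - α ω'(s)) x_s`, over feasible `x ∈ [0,1]^S` with
`x_s - α x_{s'} ≤ d(s,s')`. -/
noncomputable def lpValue {S : Type*} [Fintype S] (α : ℝ) (d : S → S → ℝ)
    (ω ω' : S → ℝ) : ℝ :=
  sSup { v : ℝ | ∃ x : S → ℝ, (∀ s, 0 ≤ x s ∧ x s ≤ 1) ∧
    (∀ s s', x s - α * x s' ≤ d s s') ∧ v = ∑ s, (ω s - α * ω' s) * x s }

/-- The skewed Kantorovich distance: the larger of the two LP values obtained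
by the two orderings of the distributions. -/
noncomputable def kantSkew {S : Type*} [Fintype S] (α : ℝ) (d : S → S → ℝ)
    (ω ω' : S → ℝ) : ℝ :=
  max (lpValue α d ω ω') (lpValue α d ω' ω)

theorem lpValue_discrete {S : Type*} [Fintype S] [DecidableEq S]
    (ω ω' : S → ℝ) (α : ℝ) (hα : 1 ≤ α) :
    lpValue α (fun s s' => if s ≠ s' then (1:ℝ) else 0) ω ω' =
      ∑ s, max (ω s - α * ω' s) 0 := by
  unfold lpValue
  apply IsGreatest.csSup_eq
  constructor
  · refine ⟨fun s => if 0 ≤ ω s - α * ω' s then 1 else 0, ?_, ?_, ?_⟩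
    · intro s
      dsimp only
      split_ifs <;> norm_num
    · intro s s'
      dsimp only
      by_cases h : s = s'
      · subst h
        simp only [ne_eq, not_true_eq_false, if_false]
        split_ifs <;> linarith
      · simp only [ne_eq, h, not_false_eq_true, if_true]
        split_ifs <;> linarith
    · apply Finset.sum_congr rfl
      intro s _
      dsimp only
      split_ifs with h
      · rw [max_eq_left h, mul_one]
      · rw [max_eq_right (le_of_not_ge h), mul_zero]
  · rintro v ⟨x, hx, -, rfl⟩
    apply Finset.sum_le_sum
    intro s _
    calc (ω s - α * ω' s) * x s ≤ max (ω s - α * ω' s) 0 * x s :=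
          mul_le_mul_of_nonneg_right (le_max_left _ _) (hx s).1
      _ ≤ max (ω s - α * ω' s) 0 :=
          mul_le_of_le_one_right (le_max_right _ _) (hx s).2

theorem event_le {S : Type*} [Fintype S] (ω ω' : S → ℝ) (α : ℝ) (E : Finset S) :
    ∑ s ∈ E, ω s - α * ∑ s ∈ E, ω' s ≤ ∑ s, max (ω s - α * ω' s) 0 := by
  rw [Finset.mul_sum, ← Finset.sum_sub_distrib]
  calc ∑ s ∈ E, (ω s - α * ω' s) ≤ ∑ s ∈ E, max (ω s - α * ω' s) 0 :=
        Finset.sum_le_sum fun s _ => le_max_left _ _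
    _ ≤ _ := Finset.sum_le_sum_of_subset_of_nonneg (Finset.subset_univ E)
        fun s _ _ => le_max_right _ _

theorem event_attained {S : Type*} [Fintype S] (ω ω' : S → ℝ) (α : ℝ) :
    ∃ E : Finset S,
      ∑ s, max (ω s - α * ω' s) 0 = ∑ s ∈ E, ω s - α * ∑ s ∈ E, ω' s := by
  classical
  refine ⟨Finset.univ.filter fun s => 0 ≤ ω s - α * ω' s, ?_⟩
  rw [Finset.mul_sum, ← Finset.sum_sub_distrib, Finset.sum_filter]
  apply Finset.sum_congr rfl
  intro s _
  split_ifs with h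
  · exact max_eq_left h
  · exact max_eq_right (le_of_not_ge h)

theorem kantSkew_discrete_eq_tvSkew {S : Type*} [Fintype S] [DecidableEq S]
    (ω ω' : S → ℝ) (hω0 : ∀ s, 0 ≤ ω s) (hω'0 : ∀ s, 0 ≤ ω' s)
    (hω1 : ∑ s, ω s = 1) (hω'1 : ∑ s, ω' s = 1)
    (α : ℝ) (hα : 1 ≤ α) :
    kantSkew α (fun s s' => if s ≠ s' then (1:ℝ) else 0) ω ω' =
      ⨆ E : Finset S, skew α (∑ s ∈ E, ω s) (∑ s ∈ E, ω' s) := by 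
  have hbdd : BddAbove (Set.range fun E : Finset S =>
      skew α (∑ s ∈ E, ω s) (∑ s ∈ E, ω' s)) := (Set.finite_range _).bddAbove
  unfold kantSkew
  rw [lpValue_discrete ω ω' α hα, lpValue_discrete ω' ω α hα]
  apply le_antisymm
  · apply max_le
    · obtain ⟨E, hE⟩ := event_attained ω ω' α
      rw [hE]
      exact le_trans (le_max_left _ _) (le_ciSup hbdd E)
    · obtain ⟨E, hE⟩ := event_attained ω' ω α
      rw [hE]
      exact le_trans (le_trans (le_max_left _ _) (le_max_right _ _)) (le_ciSup hbdd E)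
  · apply ciSup_le
    intro E
    refine max_le ((event_le ω ω' α E).trans (le_max_left _ _))
      (max_le ((event_le ω' ω α E).trans (le_max_right _ _)) ?_)
    exact le_trans (Finset.sum_nonneg fun s _ => le_max_right _ _) (le_max_left _ _)
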